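/- arXiv:2404.05740 — 7 statements merged into one kernel-verified Lean document; each statement's English description precedes it below -/
import Mathlib

section
/- Let (X,d) be a metric space with at least 3 points, let F,G : ℝ≥0 × ℝ≥0 × ℝ≥0 → ℝ≥0 satisfy the (F,G)-conditions, and let T : X → X be an (F,G)-contracting mapping on X. Then T is continuous. -/
open scoped NNReal

/-!
At an isolated point there is nothing to prove. Near an accumulation point `x` every `y ≠ x` can be
completed to a triangle `y, x, z` whose third vertex is as close to `x` as we like. All its sides
are then small, so `G` of them is small, and this bounds the distance between `T y` and `T x`.
-/

open Filter Topology

lemma eventually_nhdsNE_exists_ne_of_eventually_nhds_prod {X : Type*} [TopologicalSpace X]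
    [T1Space X] {x : X} [(𝓝[≠] x).NeBot] {p : X × X → Prop} (hp : ∀ᶠ q in 𝓝 (x, x), p q) :
    ∀ᶠ y in 𝓝[≠] x, ∃ z, z ≠ x ∧ z ≠ y ∧ p (y, z) := by
  have hp_near : ∀ᶠ y in 𝓝[≠] x, ∀ᶠ z in 𝓝[≠] x, p (y, z) :=
    (hp.curry_nhds.filter_mono nhdsWithin_le_nhds).mono fun _ h ↦ h.filter_mono nhdsWithin_le_nhds
  filter_upwards [hp_near, self_mem_nhdsWithin] with y hpy hyx
  have hz_ne_y : ∀ᶠ z in 𝓝[≠] x, z ≠ y :=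
    (eventually_ne_nhds (Ne.symm hyx)).filter_mono nhdsWithin_le_nhds
  have hz_ne_x : ∀ᶠ z in 𝓝[≠] x, z ≠ x := self_mem_nhdsWithin
  exact (hz_ne_x.and (hz_ne_y.and hpy)).exists

lemma continuousAt_of_nndist_le_of_pairwise_ne {X Y : Type*} [TopologicalSpace X] [T1Space X]
    [PseudoMetricSpace Y] {T : X → Y} {x : X} {Φ : X × X → ℝ≥0}
    (hΦ : Tendsto Φ (𝓝 (x, x)) (𝓝 0))
    (hT : ∀ y z, y ≠ x → x ≠ z → y ≠ z → nndist (T y) (T x) ≤ Φ (y, z)) :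
    ContinuousAt T x := by
  rw [continuousAt_iff_punctured_nhds]
  obtain isolated | accumulation := (𝓝[≠] x).eq_or_neBot
  · simp only [isolated, tendsto_bot]
  refine Metric.tendsto_nhds.2 fun ε hε ↦ ?_
  have hΦ_lt : ∀ᶠ q in 𝓝 (x, x), Φ q < ε.toNNReal :=
    hΦ.eventually_lt_const (Real.toNNReal_pos.2 hε)
  filter_upwards [eventually_nhdsNE_exists_ne_of_eventually_nhds_prod hΦ_lt, self_mem_nhdsWithin]
    with y ⟨z, hzx, hzy, hz_lt⟩ hyx
  exact Real.lt_toNNReal_iff_coe_lt.1 ((hT y z hyx hzx.symm hzy.symm).trans_lt hz_lt)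

lemma tendsto_nndist_triangle_nhds_zero {X : Type*} [PseudoMetricSpace X] (x : X) :
    Tendsto (fun q : X × X ↦ (nndist q.1 x, nndist x q.2, nndist q.1 q.2))
      (𝓝 (x, x)) (𝓝 (0, 0, 0)) :=
  Continuous.tendsto' (by fun_prop) _ _ (by simp only [nndist_self])

theorem stmt1_general {X Y : Type*} [MetricSpace X] [PseudoMetricSpace Y]
    {F G : ℝ≥0 × ℝ≥0 × ℝ≥0 → ℝ≥0}
    (hF : ∀ ξ η ζ : ℝ≥0, ξ ≤ F (ξ, η, ζ))
    (hG0 : G (0, 0, 0) = 0)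
    (hGcont0 : ContinuousAt G (0, 0, 0))
    {T : X → Y} {α : ℝ≥0}
    (hT : ∀ x y z : X, x ≠ y → y ≠ z → x ≠ z →
      F (nndist (T x) (T y), nndist (T y) (T z), nndist (T x) (T z)) ≤
        α * G (nndist x y, nndist y z, nndist x z)) :
    Continuous T := by
  refine continuous_iff_continuousAt.2 fun x ↦ ?_
  have hG : Tendsto (fun t ↦ α * G t) (𝓝 (0, 0, 0)) (𝓝 0) := by
    simpa only [hG0, mul_zero] using hGcont0.tendsto.const_mul α
  exact continuousAt_of_nndist_le_of_pairwise_ne (hG.comp (tendsto_nndist_triangle_nhds_zero x))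
    fun y z hyx hxz hyz ↦ (hF _ _ _).trans (hT y x z hyx hxz hyz)

theorem stmt1 {X : Type*} [MetricSpace X]
    (hX : ∃ x y z : X, x ≠ y ∧ y ≠ z ∧ x ≠ z)
    (F G : ℝ≥0 × ℝ≥0 × ℝ≥0 → ℝ≥0)
    (hFperm : ∀ ξ η ζ : ℝ≥0, F (η, ξ, ζ) = F (ξ, η, ζ) ∧ F (ξ, ζ, η) = F (ξ, η, ζ))
    (hGperm : ∀ ξ η ζ : ℝ≥0, G (η, ξ, ζ) = G (ξ, η, ζ) ∧ G (ξ, ζ, η) = G (ξ, η, ζ))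
    (hG1 : ∀ ξ η ζ : ℝ≥0, ξ ≤ G (ξ, η, ζ))
    (hFG : ∀ ξ η ζ : ℝ≥0, G (ξ, η, ζ) ≤ F (ξ, η, ζ))
    (hG0 : G (0, 0, 0) = 0)
    (hGcont0 : ContinuousAt G (0, 0, 0))
    (hGmono : Monotone G)
    (T : X → X) (α : ℝ≥0) (hα : α < 1)
    (hT : ∀ x y z : X, x ≠ y → y ≠ z → x ≠ z →
      F (nndist (T x) (T y), nndist (T y) (T z), nndist (T x) (T z)) ≤
        α * G (nndist x y, nndist y z, nndist x z))
    :
    Continuous T :=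
  stmt1_general (fun ξ η ζ ↦ (hG1 ξ η ζ).trans (hFG ξ η ζ)) hG0 hGcont0 hT
end

section
/- Let (X,d) be a complete metric space with at least 3 points, let F,G : ℝ≥0 × ℝ≥0 × ℝ≥0 → ℝ≥0 satisfy the (F,G)-conditions, and let T : X → X be an (F,G)-contracting mapping on X which does not possess periodic points of prime period 2 (i.e., there is no x ∈ X with T(Tx)=x and Tx ≠ x). Then T has a fixed point. -/
open scoped NNReal

/-!
Write `g x y z = G (d x y, d y z, d x z)`. Along the orbit `u n = T^[n] x` of a map without points
of period one or two, `g (u n) (u (n + 1)) (u (n + 2))` is positive and decays like `α ^ n`. It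
therefore never repeats a value, so the orbit is injective; and it dominates `d (u n) (u (n + 1))`,
so the orbit is Cauchy. An injective sequence eventually avoids its limit `a`, so the contraction
condition applies to `a, u n, u (n + 1)` and forces `u (n + 1) → T a`.
-/

open Filter Function
open scoped Topology

section Contraction

variable {X : Type*} {G : ℝ≥0 × ℝ≥0 × ℝ≥0 → ℝ≥0} {α : ℝ≥0} {T : X → X}

section PseudoMetricSpace

variable [PseudoMetricSpace X]

/-- The size of the triangle `x, y, z` as measured by `G`: the function `G` of its side lengths.
For `G (ξ, η, ζ) = ξ + η + ζ` it is the perimeter. -/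
def triangleSize (G : ℝ≥0 × ℝ≥0 × ℝ≥0 → ℝ≥0) (x y z : X) : ℝ≥0 :=
  G (nndist x y, nndist y z, nndist x z)

/-- `T` contracts the `G`-size of every triangle with pairwise distinct vertices by the factor `α`.
This is the `(F, G)`-contraction condition with `F = G`; it follows from that for any `F ≥ G`. -/
def ContractsTriangles (G : ℝ≥0 × ℝ≥0 × ℝ≥0 → ℝ≥0) (α : ℝ≥0) (T : X → X) : Prop :=
  ∀ x y z : X, x ≠ y → y ≠ z → x ≠ z →
    triangleSize G (T x) (T y) (T z) ≤ α * triangleSize G x y z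

lemma nndist_le_triangleSize (hG : ∀ ξ η ζ : ℝ≥0, ξ ≤ G (ξ, η, ζ)) (x y z : X) :
    nndist x y ≤ triangleSize G x y z :=
  hG _ _ _

lemma tendsto_triangleSize_zero (hG₀ : Tendsto G (𝓝 0) (𝓝 0)) {ι : Type*} {l : Filter ι}
    {u v w : ι → X} {a : X} (hu : Tendsto u l (𝓝 a)) (hv : Tendsto v l (𝓝 a))
    (hw : Tendsto w l (𝓝 a)) :
    Tendsto (fun i ↦ triangleSize G (u i) (v i) (w i)) l (𝓝 0) := by
  have hsides : Tendsto (fun i ↦ (nndist (u i) (v i), nndist (v i) (w i), nndist (u i) (w i)))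
      l (𝓝 0) := by
    simpa [← Prod.mk_zero_zero] using
      (hu.nndist hv).prodMk_nhds ((hv.nndist hw).prodMk_nhds (hu.nndist hw))
  exact hG₀.comp hsides

lemma ContractsTriangles.cauchySeq_iterate (hT : ContractsTriangles G α T) (hα : α < 1)
    (hG : ∀ ξ η ζ : ℝ≥0, ξ ≤ G (ξ, η, ζ)) {x : X} (hinj : Injective fun n ↦ T^[n] x) :
    CauchySeq fun n ↦ T^[n] x := by
  let size (n : ℕ) : ℝ≥0 := triangleSize G (T^[n] x) (T^[n + 1] x) (T^[n + 2] x)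
  have size_succ_le (n : ℕ) : size (n + 1) ≤ α * size n := by
    simpa only [← iterate_succ_apply'] using
      hT (T^[n] x) (T^[n + 1] x) (T^[n + 2] x)
        (hinj.ne (by lia)) (hinj.ne (by lia)) (hinj.ne (by lia))
  have size_le_geometric (n : ℕ) : (size n : ℝ) ≤ α ^ n * size 0 :=
    le_geom (u := fun k ↦ (size k : ℝ)) α.coe_nonneg n fun k _ ↦ mod_cast size_succ_le k
  refine cauchySeq_of_le_geometric (α : ℝ) (size 0) (mod_cast hα) fun n ↦ ?_
  calc
    dist (T^[n] x) (T^[n + 1] x) ≤ size n := mod_cast nndist_le_triangleSize hG _ _ _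
    _ ≤ size 0 * α ^ n := (size_le_geometric n).trans_eq (mul_comm _ _)

end PseudoMetricSpace

section MetricSpace

variable [MetricSpace X]

lemma ContractsTriangles.injective_iterate (hT : ContractsTriangles G α T) (hα : α < 1)
    (hG : ∀ ξ η ζ : ℝ≥0, ξ ≤ G (ξ, η, ζ)) (hfix : ∀ y, T y ≠ y) (hper : ∀ y, T (T y) ≠ y)
    (x : X) : Injective fun n ↦ T^[n] x := by
  let size (y : X) : ℝ≥0 := triangleSize G y (T y) (T (T y))
  have size_pos (y : X) : 0 < size y :=
    calc
      0 < nndist y (T y) := pos_iff_ne_zero.2 (nndist_eq_zero.not.2 (hfix y).symm)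
      _ ≤ size y := nndist_le_triangleSize hG _ _ _
  have size_map_lt (y : X) : size (T y) < size y :=
    calc
      size (T y) ≤ α * size y := hT _ _ _ (hfix y).symm (hfix (T y)).symm (hper y).symm
      _ < size y := mul_lt_of_lt_one_left (size_pos y) hα
  have size_strictAnti : StrictAnti fun n ↦ size (T^[n] x) :=
    strictAnti_nat_of_succ_lt fun n ↦ by
      simpa only [iterate_succ_apply'] using size_map_lt (T^[n] x)
  exact Injective.of_comp (f := size) size_strictAnti.injective

lemma ContractsTriangles.isFixedPt_of_tendsto_iterate (hT : ContractsTriangles G α T)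
    (hG : ∀ ξ η ζ : ℝ≥0, ξ ≤ G (ξ, η, ζ)) (hG₀ : Tendsto G (𝓝 0) (𝓝 0)) {x a : X}
    (hinj : Injective fun n ↦ T^[n] x) (ha : Tendsto (fun n ↦ T^[n] x) atTop (𝓝 a)) :
    IsFixedPt T a := by
  have ha_succ : Tendsto (fun n ↦ T^[n + 1] x) atTop (𝓝 a) := ha.comp (tendsto_add_atTop_nat 1)
  have eventually_ne : ∀ᶠ n in atTop, T^[n] x ≠ a :=
    Nat.cofinite_eq_atTop ▸ hinj.tendsto_cofinite.eventually (eventually_cofinite_ne a)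
  have nndist_le : ∀ᶠ n in atTop,
      nndist (T a) (T^[n + 1] x) ≤ α * triangleSize G a (T^[n] x) (T^[n + 1] x) := by
    filter_upwards [eventually_ne, (tendsto_add_atTop_nat 1).eventually eventually_ne]
      with n hn hn_succ
    calc
      nndist (T a) (T^[n + 1] x)
          ≤ triangleSize G (T a) (T^[n + 1] x) (T^[n + 2] x) := nndist_le_triangleSize hG _ _ _
      _ ≤ α * triangleSize G a (T^[n] x) (T^[n + 1] x) := by
        simpa only [← iterate_succ_apply'] using
          hT a (T^[n] x) (T^[n + 1] x) hn.symm (hinj.ne n.succ_ne_self.symm) hn_succ.symm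
  have size_tendsto : Tendsto (fun n ↦ α * triangleSize G a (T^[n] x) (T^[n + 1] x))
      atTop (𝓝 0) := by
    simpa using (tendsto_triangleSize_zero hG₀ tendsto_const_nhds ha ha_succ).const_mul α
  have nndist_tendsto_zero : Tendsto (fun n ↦ nndist (T a) (T^[n + 1] x)) atTop (𝓝 0) :=
    tendsto_of_tendsto_of_tendsto_of_le_of_le' tendsto_const_nhds size_tendsto
      (.of_forall fun _ ↦ zero_le) nndist_le
  exact nndist_eq_zero.1
    (tendsto_nhds_unique (tendsto_const_nhds.nndist ha_succ) nndist_tendsto_zero)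

theorem stmt2_general [CompleteSpace X] [Nonempty X]
    (hG : ∀ ξ η ζ : ℝ≥0, ξ ≤ G (ξ, η, ζ)) (hG₀ : Tendsto G (𝓝 0) (𝓝 0))
    (hT : ContractsTriangles G α T) (hα : α < 1)
    (hper : ¬ ∃ x : X, T (T x) = x ∧ T x ≠ x) :
    ∃ x : X, T x = x := by
  by_contra! hfix
  obtain ⟨x⟩ := ‹Nonempty X›
  have hinj : Injective fun n ↦ T^[n] x :=
    hT.injective_iterate hα hG hfix (fun y hy ↦ hper ⟨y, hy, hfix y⟩) x
  obtain ⟨a, ha⟩ := cauchySeq_tendsto_of_complete (hT.cauchySeq_iterate hα hG hinj)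
  exact hfix a (hT.isFixedPt_of_tendsto_iterate hG hG₀ hinj ha)

end MetricSpace

end Contraction

theorem stmt2 {X : Type*} [MetricSpace X] [CompleteSpace X]
    (hX : ∃ x y z : X, x ≠ y ∧ y ≠ z ∧ x ≠ z)
    (F G : ℝ≥0 × ℝ≥0 × ℝ≥0 → ℝ≥0)
    (hFperm : ∀ ξ η ζ : ℝ≥0, F (η, ξ, ζ) = F (ξ, η, ζ) ∧ F (ξ, ζ, η) = F (ξ, η, ζ))
    (hGperm : ∀ ξ η ζ : ℝ≥0, G (η, ξ, ζ) = G (ξ, η, ζ) ∧ G (ξ, ζ, η) = G (ξ, η, ζ))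
    (hG1 : ∀ ξ η ζ : ℝ≥0, ξ ≤ G (ξ, η, ζ))
    (hFG : ∀ ξ η ζ : ℝ≥0, G (ξ, η, ζ) ≤ F (ξ, η, ζ))
    (hG0 : G (0, 0, 0) = 0)
    (hGcont0 : ContinuousAt G (0, 0, 0))
    (hGmono : Monotone G)
    (T : X → X) (α : ℝ≥0) (hα : α < 1)
    (hT : ∀ x y z : X, x ≠ y → y ≠ z → x ≠ z →
      F (nndist (T x) (T y), nndist (T y) (T z), nndist (T x) (T z)) ≤
        α * G (nndist x y, nndist y z, nndist x z))
    (hper : ¬ ∃ x : X, T (T x) = x ∧ T x ≠ x)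
    :
    ∃ x : X, T x = x := by
  have : Nonempty X := hX.nonempty
  exact stmt2_general hG1 (hG0 ▸ hGcont0.tendsto)
    (fun x y z hxy hyz hxz ↦ (hFG _ _ _).trans (hT x y z hxy hyz hxz)) hα hper
end

section
/- Let (X,d) be a metric space with at least 3 points, let F,G : ℝ≥0 × ℝ≥0 × ℝ≥0 → ℝ≥0 satisfy the (F,G)-conditions, and let T : X → X be an (F,G)-contracting mapping on X. Then T has at most two fixed points; i.e., there do not exist three pairwise distinct points x,y,z ∈ X with Tx=x, Ty=y and Tz=z. -/
open scoped NNReal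

open Function (IsFixedPt)

/-- `T` is an `(F, G)`-contracting mapping with contraction factor `α`. The paper quantifies `α < 1`
existentially; here `α` is a parameter and `α < 1` is a separate hypothesis, as with
`LipschitzWith`. -/
def IsFGContractingWith {X : Type*} [PseudoMetricSpace X] (F G : ℝ≥0 × ℝ≥0 × ℝ≥0 → ℝ≥0) (α : ℝ≥0)
    (T : X → X) : Prop :=
  ∀ x y z : X, x ≠ y → y ≠ z → x ≠ z →
    F (nndist (T x) (T y), nndist (T y) (T z), nndist (T x) (T z)) ≤
      α * G (nndist x y, nndist y z, nndist x z)

theorem IsFGContractingWith.apply_nndist_eq_zero_of_isFixedPt {X : Type*} [PseudoMetricSpace X]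
    {F G : ℝ≥0 × ℝ≥0 × ℝ≥0 → ℝ≥0} {α : ℝ≥0} {T : X → X} (hT : IsFGContractingWith F G α T)
    (hGF : G ≤ F) (hα : α < 1) {x y z : X} (hxy : x ≠ y) (hyz : y ≠ z) (hxz : x ≠ z)
    (hx : IsFixedPt T x) (hy : IsFixedPt T y) (hz : IsFixedPt T z) :
    G (nndist x y, nndist y z, nndist x z) = 0 := by
  set p := (nndist x y, nndist y z, nndist x z)
  have self_le_mul : G p ≤ α * G p :=
    calc
      G p ≤ F p := hGF p
      _ = F (nndist (T x) (T y), nndist (T y) (T z), nndist (T x) (T z)) := by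
        rw [hx.eq, hy.eq, hz.eq]
      _ ≤ α * G p := hT x y z hxy hyz hxz
  by_contra hGp
  exact self_le_mul.not_gt (mul_lt_of_lt_one_left (pos_iff_ne_zero.mpr hGp) hα)

theorem stmt3_general {X : Type*} [MetricSpace X] {F G : ℝ≥0 × ℝ≥0 × ℝ≥0 → ℝ≥0} {α : ℝ≥0}
    {T : X → X} (hT : IsFGContractingWith F G α T) (hGF : G ≤ F)
    (hGpos : ∀ ξ η ζ : ℝ≥0, 0 < ξ → 0 < η → 0 < ζ → 0 < G (ξ, η, ζ)) (hα : α < 1) :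
    ¬ ∃ x y z : X, x ≠ y ∧ y ≠ z ∧ x ≠ z ∧ T x = x ∧ T y = y ∧ T z = z := by
  rintro ⟨x, y, z, hxy, hyz, hxz, hx, hy, hz⟩
  have nndist_pos {a b : X} (hab : a ≠ b) : 0 < nndist a b :=
    pos_iff_ne_zero.mpr (nndist_eq_zero.not.mpr hab)
  exact (hGpos _ _ _ (nndist_pos hxy) (nndist_pos hyz) (nndist_pos hxz)).ne'
    (hT.apply_nndist_eq_zero_of_isFixedPt hGF hα hxy hyz hxz hx hy hz)

theorem stmt3 {X : Type*} [MetricSpace X]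
    (hX : ∃ x y z : X, x ≠ y ∧ y ≠ z ∧ x ≠ z)
    (F G : ℝ≥0 × ℝ≥0 × ℝ≥0 → ℝ≥0)
    (hFperm : ∀ ξ η ζ : ℝ≥0, F (η, ξ, ζ) = F (ξ, η, ζ) ∧ F (ξ, ζ, η) = F (ξ, η, ζ))
    (hGperm : ∀ ξ η ζ : ℝ≥0, G (η, ξ, ζ) = G (ξ, η, ζ) ∧ G (ξ, ζ, η) = G (ξ, η, ζ))
    (hG1 : ∀ ξ η ζ : ℝ≥0, ξ ≤ G (ξ, η, ζ))
    (hFG : ∀ ξ η ζ : ℝ≥0, G (ξ, η, ζ) ≤ F (ξ, η, ζ))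
    (hG0 : G (0, 0, 0) = 0)
    (hGcont0 : ContinuousAt G (0, 0, 0))
    (hGmono : Monotone G)
    (T : X → X) (α : ℝ≥0) (hα : α < 1)
    (hT : ∀ x y z : X, x ≠ y → y ≠ z → x ≠ z →
      F (nndist (T x) (T y), nndist (T y) (T z), nndist (T x) (T z)) ≤
        α * G (nndist x y, nndist y z, nndist x z))
    :
    ¬ ∃ x y z : X, x ≠ y ∧ y ≠ z ∧ x ≠ z ∧ T x = x ∧ T y = y ∧ T z = z := by
  exact stmt3_general hT (fun _ => hFG _ _ _) (fun _ _ _ hξ _ _ => hξ.trans_le (hG1 _ _ _)) hα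
end

section
/- Let (X,d) be a complete metric space with at least 3 points, let F,G : ℝ≥0 × ℝ≥0 × ℝ≥0 → ℝ≥0 satisfy the (F,G)-conditions and additionally be continuous on their whole domain, and let T : X → X be an (F,G)-contracting mapping without periodic points of prime period 2. Suppose T has a fixed point x* which is the limit of some iteration sequence x₀, x₁ = Tx₀, x₂ = Tx₁, … with xₙ ≠ x* for all n = 1,2,…. Then x* is the unique fixed point of T. -/
open scoped NNReal

/-!
Since `G ≤ F`, an `(F, G)`-contracting map `T` is `(G, G)`-contracting. It is continuous, because
the sides of a triangle `x, p, z` with `x, z → p` tend to `0`. At an accumulation point `p`,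
letting the third vertex of `p, q, z` tend to `p` therefore gives
`G (d(Tp,Tq), d(Tq,Tp), 0) ≤ α G (d(p,q), d(q,p), 0)`. For distinct fixed points `p`, `q` the two
values of `G` coincide and are positive, which is impossible as `α < 1`. The limit of an orbit that
avoids it is an accumulation point.
-/

open Filter Function
open scoped Topology

theorem tendsto_nndist_triple {ι X : Type*} [PseudoMetricSpace X] {l : Filter ι} {f : ι → X}
    {a : X} (hf : Tendsto f l (𝓝 a)) (b : X) :
    Tendsto (fun i => (nndist a b, nndist b (f i), nndist a (f i))) l
      (𝓝 (nndist a b, nndist b a, 0)) := by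
  have h_third : Tendsto (fun i => nndist a (f i)) l (𝓝 0) := by
    simpa using (tendsto_const_nhds (x := a)).nndist hf
  exact tendsto_const_nhds.prodMk_nhds ((tendsto_const_nhds.nndist hf).prodMk_nhds h_third)

/-- `T` contracts the triangles with pairwise distinct vertices by the factor `α`, where `F`
measures the image triangle and `G` the original one, each through its three side lengths.
The factor is a parameter; the bound `α < 1` is assumed separately. -/
def IsFGContracting {X : Type*} [MetricSpace X] (F G : ℝ≥0 × ℝ≥0 × ℝ≥0 → ℝ≥0) (α : ℝ≥0)
    (T : X → X) : Prop :=
  ∀ x y z : X, x ≠ y → y ≠ z → x ≠ z →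
    F (nndist (T x) (T y), nndist (T y) (T z), nndist (T x) (T z)) ≤
      α * G (nndist x y, nndist y z, nndist x z)

namespace IsFGContracting

variable {X : Type*} [MetricSpace X] {F F' G : ℝ≥0 × ℝ≥0 × ℝ≥0 → ℝ≥0} {α : ℝ≥0} {T : X → X}

theorem mono_left (hT : IsFGContracting F G α T) (hF : F' ≤ F) : IsFGContracting F' G α T :=
  fun x y z hxy hyz hxz => (hF _).trans (hT x y z hxy hyz hxz)

theorem continuous (hT : IsFGContracting F G α T) (hF : ∀ ξ η ζ : ℝ≥0, ξ ≤ F (ξ, η, ζ))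
    (hG_zero : G (0, 0, 0) = 0) (hG_cont : ContinuousAt G (0, 0, 0)) : Continuous T := by
  refine continuous_iff_continuousAt.2 fun p => continuousWithinAt_compl_self.1 ?_
  rcases (𝓝[≠] p).eq_or_neBot with h_isolated | h_acc
  · simp [ContinuousWithinAt, h_isolated]
  have bound_tendsto : Tendsto
      (fun u : X × X => α * G (nndist u.1 p, nndist p u.2, nndist u.1 u.2)) (𝓝 (p, p)) (𝓝 0) := by
    have sides_cont : ContinuousAt
        (fun u : X × X => (nndist u.1 p, nndist p u.2, nndist u.1 u.2)) (p, p) := by fun_prop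
    simpa [ContinuousAt, hG_zero] using (hG_cont.comp_of_eq sides_cont (by simp)).const_mul α
  refine Metric.continuousWithinAt_iff'.2 fun ε hε => ?_
  have bound_small := (bound_tendsto.eventually_lt_const (Real.toNNReal_pos.2 hε)).curry_nhds
  filter_upwards [nhdsWithin_le_nhds bound_small, self_mem_nhdsWithin] with x hx hxp
  have third_point : ∀ᶠ z in 𝓝[≠] p,
      α * G (nndist x p, nndist p z, nndist x z) < ε.toNNReal ∧ z ≠ x ∧ z ≠ p := by
    filter_upwards [nhdsWithin_le_nhds hx, nhdsWithin_le_nhds (eventually_ne_nhds (Ne.symm hxp)),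
      self_mem_nhdsWithin] with z hz hzx hzp using ⟨hz, hzx, hzp⟩
  obtain ⟨z, hz, hzx, hzp⟩ := third_point.exists
  rw [← coe_nndist, ← Real.lt_toNNReal_iff_coe_lt]
  calc nndist (T x) (T p)
      ≤ F (nndist (T x) (T p), nndist (T p) (T z), nndist (T x) (T z)) := hF _ _ _
    _ ≤ α * G (nndist x p, nndist p z, nndist x z) := hT x p z hxp hzp.symm hzx.symm
    _ < ε.toNNReal := hz

theorem degenerate_triangle_le (hT : IsFGContracting F G α T) {p q : X} [(𝓝[≠] p).NeBot]
    (hpq : p ≠ q) (hTp : ContinuousAt T p)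
    (hF : ContinuousAt F (nndist (T p) (T q), nndist (T q) (T p), 0))
    (hG : ContinuousAt G (nndist p q, nndist q p, 0)) :
    F (nndist (T p) (T q), nndist (T q) (T p), 0) ≤ α * G (nndist p q, nndist q p, 0) := by
  have hz : Tendsto (fun z => z) (𝓝[≠] p) (𝓝 p) := nhdsWithin_le_nhds
  have image_sides := tendsto_nndist_triple (hTp.tendsto.comp hz) (T q)
  have source_sides := tendsto_nndist_triple hz q
  refine le_of_tendsto_of_tendsto (hF.tendsto.comp image_sides)
    ((hG.tendsto.comp source_sides).const_mul α) ?_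
  filter_upwards [self_mem_nhdsWithin, nhdsWithin_le_nhds (eventually_ne_nhds hpq)] with z hzp hzq
  exact hT p q z hpq hzq.symm (Ne.symm hzp)

end IsFGContracting

theorem stmt4_general {X : Type*} [MetricSpace X] {F G : ℝ≥0 × ℝ≥0 × ℝ≥0 → ℝ≥0}
    (hG_le : ∀ ξ η ζ : ℝ≥0, ξ ≤ G (ξ, η, ζ))
    (hGF : ∀ ξ η ζ : ℝ≥0, G (ξ, η, ζ) ≤ F (ξ, η, ζ))
    (hG_zero : G (0, 0, 0) = 0) (hG_cont : Continuous G)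
    {T : X → X} {α : ℝ≥0} (hα : α < 1) (hT : IsFGContracting F G α T)
    {p : X} [(𝓝[≠] p).NeBot] (hp : IsFixedPt T p) {q : X} (hq : IsFixedPt T q) : q = p := by
  by_contra hqp
  have hT_GG : IsFGContracting G G α T := hT.mono_left fun _ => hGF _ _ _
  have hT_cont : Continuous T := hT_GG.continuous hG_le hG_zero hG_cont.continuousAt
  have contracted := hT_GG.degenerate_triangle_le (Ne.symm hqp) hT_cont.continuousAt
    hG_cont.continuousAt hG_cont.continuousAt
  rw [hp.eq, hq.eq] at contracted
  have G_pos : 0 < G (nndist p q, nndist q p, 0) :=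
    (pos_iff_ne_zero.2 (nndist_eq_zero.not.2 (Ne.symm hqp))).trans_le (hG_le _ _ _)
  exact contracted.not_gt (mul_lt_of_lt_one_left G_pos hα)

theorem stmt4 {X : Type*} [MetricSpace X] [CompleteSpace X]
    (hX : ∃ x y z : X, x ≠ y ∧ y ≠ z ∧ x ≠ z)
    (F G : ℝ≥0 × ℝ≥0 × ℝ≥0 → ℝ≥0)
    (hFperm : ∀ ξ η ζ : ℝ≥0, F (η, ξ, ζ) = F (ξ, η, ζ) ∧ F (ξ, ζ, η) = F (ξ, η, ζ))
    (hGperm : ∀ ξ η ζ : ℝ≥0, G (η, ξ, ζ) = G (ξ, η, ζ) ∧ G (ξ, ζ, η) = G (ξ, η, ζ))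
    (hG1 : ∀ ξ η ζ : ℝ≥0, ξ ≤ G (ξ, η, ζ))
    (hFG : ∀ ξ η ζ : ℝ≥0, G (ξ, η, ζ) ≤ F (ξ, η, ζ))
    (hG0 : G (0, 0, 0) = 0)
    (hGcont0 : ContinuousAt G (0, 0, 0))
    (hGmono : Monotone G)
    (T : X → X) (α : ℝ≥0) (hα : α < 1)
    (hT : ∀ x y z : X, x ≠ y → y ≠ z → x ≠ z →
      F (nndist (T x) (T y), nndist (T y) (T z), nndist (T x) (T z)) ≤
        α * G (nndist x y, nndist y z, nndist x z))
    (hFcont : Continuous F) (hGcont : Continuous G)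
    (hper : ¬ ∃ x : X, T (T x) = x ∧ T x ≠ x)
    (xstar : X) (hfix : T xstar = xstar)
    (x : ℕ → X) (hiter : ∀ n : ℕ, x (n + 1) = T (x n))
    (hne : ∀ n : ℕ, 1 ≤ n → x n ≠ xstar)
    (hlim : Filter.Tendsto x Filter.atTop (nhds xstar))
    :
    ∀ y : X, T y = y → y = xstar := by
  have : (𝓝[≠] xstar).NeBot :=
    (tendsto_nhdsWithin_iff.2 ⟨hlim, (eventually_ge_atTop 1).mono hne⟩).neBot
  exact fun y hy => stmt4_general hG1 hFG hG0 hGcont hα hT hfix hy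
end

section
/- Let (X,d) be a metric space with at least 3 points and let T : X → X be a mapping contracting perimeters of triangles in the sense of Edelstein. Then T is continuous. -/
open scoped NNReal

open Filter Topology

/-!
Triangles may degenerate: if `a` is an accumulation point and `x ≠ a`, let a third vertex `z ≠ a`
tend to `a`. The perimeter of `x, a, z` tends to `2 * dist x a`, while the image triangle has
perimeter at least `2 * dist (f x) (f a)`, so control of perimeters becomes a Lipschitz bound at
`a`. At an isolated point there is nothing to prove.
-/

section Perimeter

variable {X : Type*} [PseudoMetricSpace X]

/-- The perimeter of the triangle with vertices `x`, `y`, `z`, which may be degenerate. -/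
def perimeter (x y z : X) : ℝ :=
  dist x y + dist y z + dist z x

theorem two_mul_dist_le_perimeter (x y z : X) : 2 * dist x y ≤ perimeter x y z := by
  have triangle : dist x y ≤ dist y z + dist z x := by
    simpa only [dist_comm] using dist_triangle y z x
  unfold perimeter
  linarith

theorem perimeter_self_right (x y : X) : perimeter x y y = 2 * dist x y := by
  rw [perimeter, dist_self, dist_comm y x]
  ring

theorem continuous_perimeter_right (x y : X) : Continuous (perimeter x y) := by
  unfold perimeter
  fun_prop

end Perimeter

/-- `f` multiplies the perimeter of each triangle with pairwise distinct vertices by at most `K`: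
the analogue of `LipschitzWith` for triples of points. Mappings contracting perimeters of triangles
in the sense of Edelstein satisfy this with `K = 1`. -/
def PerimeterLipschitzWith {X Y : Type*} [PseudoMetricSpace X] [PseudoMetricSpace Y]
    (K : ℝ≥0) (f : X → Y) : Prop :=
  ∀ ⦃x y z : X⦄, x ≠ y → y ≠ z → x ≠ z → perimeter (f x) (f y) (f z) ≤ K * perimeter x y z

namespace PerimeterLipschitzWith

variable {X Y : Type*} [MetricSpace X] [PseudoMetricSpace Y] {K : ℝ≥0} {f : X → Y}

theorem dist_le_mul_of_neBot_nhdsNE (hf : PerimeterLipschitzWith K f) (a : X) [(𝓝[≠] a).NeBot]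
    (x : X) : dist (f x) (f a) ≤ K * dist x a := by
  rcases eq_or_ne x a with rfl | hxa
  · simp
  have perimeter_tendsto :
      Tendsto (fun z ↦ K * perimeter x a z) (𝓝[≠] a) (𝓝 (K * (2 * dist x a))) := by
    rw [← perimeter_self_right]
    exact (((continuous_perimeter_right x a).tendsto a).const_mul _).mono_left
      nhdsWithin_le_nhds
  have image_dist_le : ∀ᶠ z in 𝓝[≠] a, 2 * dist (f x) (f a) ≤ K * perimeter x a z := by
    filter_upwards [self_mem_nhdsWithin, eventually_ne_nhdsWithin hxa.symm] with z hza hzx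
    exact (two_mul_dist_le_perimeter _ _ _).trans (hf hxa (Ne.symm hza) hzx.symm)
  linarith [ge_of_tendsto perimeter_tendsto image_dist_le]

theorem continuousAt (hf : PerimeterLipschitzWith K f) (a : X) : ContinuousAt f a := by
  rcases eq_or_neBot (𝓝[≠] a) with isolated | _
  · rw [continuousAt_iff_punctured_nhds, isolated]
    exact tendsto_bot
  · exact continuousAt_of_locally_lipschitz one_pos K fun x _ ↦
      hf.dist_le_mul_of_neBot_nhdsNE a x

end PerimeterLipschitzWith

theorem stmt7_general {X Y : Type*} [MetricSpace X] [PseudoMetricSpace Y] {K : ℝ≥0} {f : X → Y}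
    (hf : PerimeterLipschitzWith K f) : Continuous f :=
  continuous_iff_continuousAt.2 hf.continuousAt

theorem stmt7 {X : Type*} [MetricSpace X]
    (hX : ∃ x y z : X, x ≠ y ∧ y ≠ z ∧ x ≠ z)
    (T : X → X)
    (hT : ∀ x y z : X, x ≠ y → y ≠ z → x ≠ z →
      dist (T x) (T y) + dist (T y) (T z) + dist (T x) (T z) <
        dist x y + dist y z + dist z x)
    :
    Continuous T :=
  stmt7_general (K := 1) fun x y z hxy hyz hxz ↦ by
    simpa only [perimeter, NNReal.coe_one, one_mul, dist_comm (T z)] using (hT x y z hxy hyz hxz).le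
end

section
/- Let (X,d) be a metric space with at least 3 points and let T : X → X be a mapping contracting perimeters of triangles in the sense of Edelstein which does not possess periodic points of prime period 2 (i.e., there is no x ∈ X with T(Tx)=x and Tx ≠ x). Assume there exists x ∈ X such that the sequence of iterates (Tⁿx) has a subsequence (Tⁿⁱx) converging to a point ξ ∈ X. Then ξ is a fixed point of T. -/
open scoped NNReal

/-!
The perimeter `P y` of the triangle `y, T y, T (T y)` is a Lyapunov function: `P (T y) ≤ P y`, and
the inequality is strict unless `T (T y) = y`. Since `T` turns out to be continuous, both `P ξ` and
`P (T ξ)` are cluster values of the antitone sequence `P (T^[k] x)`, hence both equal its infimum,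
and `T (T ξ) = ξ` follows.
-/

open Filter Function Set Topology

theorem isGLB_range_of_antitone_of_mapClusterPt {ι α : Type*} [Preorder ι] [TopologicalSpace α]
    [Preorder α] [OrderClosedTopology α] {u : ι → α} {a : α}
    (hu : Antitone u) (ha : MapClusterPt a atTop u) : IsGLB (range u) a := by
  refine ⟨?_, fun b hb => ?_⟩
  · rintro _ ⟨i, rfl⟩
    have eventually_le : ∀ᶠ j in atTop, u j ≤ u i := (eventually_ge_atTop i).mono fun _ hj => hu hj
    exact isClosed_Iic.mem_of_mapClusterPt ha eventually_le
  · have eventually_ge : ∀ᶠ j in atTop, b ≤ u j := .of_forall fun j => hb (mem_range_self j)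
    exact isClosed_Ici.mem_of_mapClusterPt ha eventually_ge

theorem apply_map_eq_of_mapClusterPt_iterate {X α : Type*} [TopologicalSpace X]
    [TopologicalSpace α] [PartialOrder α] [OrderClosedTopology α]
    {T : X → X} {V : X → α} {x ξ : X} (hV : ∀ y, V (T y) ≤ V y) (hTξ : ContinuousAt T ξ)
    (hVξ : ContinuousAt V ξ) (hVTξ : ContinuousAt V (T ξ))
    (hξ : MapClusterPt ξ atTop fun k => T^[k] x) : V (T ξ) = V ξ := by
  have antitone_orbit : Antitone fun k => V (T^[k] x) :=
    antitone_nat_of_succ_le fun k => by simpa only [iterate_succ_apply'] using hV (T^[k] x)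
  have cluster : MapClusterPt (V ξ) atTop fun k => V (T^[k] x) := hξ.continuousAt_comp hVξ
  have cluster_map : MapClusterPt (V (T ξ)) atTop fun k => V (T^[k] x) := by
    refine .of_comp (tendsto_add_atTop_nat 1) ?_
    simpa only [comp_def, iterate_succ_apply'] using
      hξ.continuousAt_comp (ContinuousAt.comp hVTξ hTξ)
  exact (isGLB_range_of_antitone_of_mapClusterPt antitone_orbit cluster_map).unique
    (isGLB_range_of_antitone_of_mapClusterPt antitone_orbit cluster)

/-- The perimeter of the possibly degenerate triangle `y, T y, T (T y)`, which serves as a Lyapunov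
function for `T`. -/
def orbitPerimeter {X : Type*} [PseudoMetricSpace X] (T : X → X) (y : X) : ℝ :=
  dist y (T y) + dist (T y) (T (T y)) + dist (T (T y)) y

theorem continuous_orbitPerimeter {X : Type*} [PseudoMetricSpace X] {T : X → X}
    (hT : Continuous T) : Continuous (orbitPerimeter T) := by
  unfold orbitPerimeter
  fun_prop

/-- `T` is a mapping contracting perimeters of triangles in the sense of Edelstein: it strictly
decreases the perimeter of every triangle with pairwise distinct vertices. -/
def ContractsTrianglePerimeters {X : Type*} [MetricSpace X] (T : X → X) : Prop :=
  ∀ x y z : X, x ≠ y → y ≠ z → x ≠ z →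
    dist (T x) (T y) + dist (T y) (T z) + dist (T x) (T z) < dist x y + dist y z + dist z x

namespace ContractsTrianglePerimeters

variable {X : Type*} [MetricSpace X] {T : X → X}

-- The image perimeter is at least twice its side `dist (T x) (T y)`, while the original perimeter
-- is at most `2 * (dist x y + dist y z)`.
theorem dist_map_lt_add (hT : ContractsTrianglePerimeters T) {x y z : X}
    (hxy : x ≠ y) (hyz : y ≠ z) (hxz : x ≠ z) : dist (T x) (T y) < dist x y + dist y z := by
  have perimeter_lt := hT x y z hxy hyz hxz
  have image_side_le := dist_triangle_right (T x) (T y) (T z)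
  have side_le := dist_triangle x y z
  rw [dist_comm z x] at perimeter_lt
  linarith

protected theorem continuous (hT : ContractsTrianglePerimeters T) : Continuous T := by
  refine continuous_iff_continuousAt.2 fun a => continuousAt_iff_punctured_nhds.2 ?_
  rcases (𝓝[≠] a).eq_or_neBot with isolated | accumulation
  · simp only [isolated, tendsto_bot]
  refine Metric.tendsto_nhds.2 fun ε hε => ?_
  obtain ⟨z, hz, hza⟩ : ∃ z, dist z a < ε / 2 ∧ z ≠ a :=
    accumulation.nonempty_of_mem (inter_mem
      (mem_nhdsWithin_of_mem_nhds (Metric.ball_mem_nhds a (half_pos hε))) self_mem_nhdsWithin)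
  filter_upwards [self_mem_nhdsWithin,
    mem_nhdsWithin_of_mem_nhds (Metric.ball_mem_nhds a (dist_pos.2 hza))]
    with y (hya : y ≠ a) (hy : dist y a < dist z a)
  have hyz : y ≠ z := by
    rintro rfl
    exact hy.false
  calc
    dist (T y) (T a) < dist y a + dist a z := hT.dist_map_lt_add hya hza.symm hyz
    _ = dist y a + dist z a := by rw [dist_comm a z]
    _ < ε := by linarith

theorem orbitPerimeter_map_lt (hT : ContractsTrianglePerimeters T) {y : X} (hy : T (T y) ≠ y) :
    orbitPerimeter T (T y) < orbitPerimeter T y := by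
  have map_ne : T y ≠ y := fun h => hy (by rw [h, h])
  by_cases fixed : T (T y) = T y
  · have side_pos : 0 < dist (T y) y := dist_pos.2 map_ne
    simp only [orbitPerimeter, fixed, dist_self, dist_comm y (T y)]
    linarith
  · simpa only [orbitPerimeter, dist_comm (T (T (T y))) (T y)] using
      hT y (T y) (T (T y)) map_ne.symm (Ne.symm fixed) hy.symm

theorem orbitPerimeter_map_le (hT : ContractsTrianglePerimeters T) (y : X) :
    orbitPerimeter T (T y) ≤ orbitPerimeter T y := by
  by_cases hy : T (T y) = y
  · simp only [orbitPerimeter, hy, dist_self, dist_comm y (T y), le_refl]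
  · exact (hT.orbitPerimeter_map_lt hy).le

end ContractsTrianglePerimeters

theorem stmt8_general {X : Type*} [MetricSpace X] {T : X → X}
    (hT : ContractsTrianglePerimeters T) {x ξ : X}
    (hξ : MapClusterPt ξ atTop fun k => T^[k] x) : T (T ξ) = ξ := by
  have perimeter_eq : orbitPerimeter T (T ξ) = orbitPerimeter T ξ :=
    apply_map_eq_of_mapClusterPt_iterate hT.orbitPerimeter_map_le hT.continuous.continuousAt
      (continuous_orbitPerimeter hT.continuous).continuousAt
      (continuous_orbitPerimeter hT.continuous).continuousAt hξ
  by_contra hne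
  exact (hT.orbitPerimeter_map_lt hne).ne perimeter_eq

theorem stmt8 {X : Type*} [MetricSpace X]
    (hX : ∃ x y z : X, x ≠ y ∧ y ≠ z ∧ x ≠ z)
    (T : X → X)
    (hT : ∀ x y z : X, x ≠ y → y ≠ z → x ≠ z →
      dist (T x) (T y) + dist (T y) (T z) + dist (T x) (T z) <
        dist x y + dist y z + dist z x)
    (hper : ¬ ∃ x : X, T (T x) = x ∧ T x ≠ x)
    (x : X) (n : ℕ → ℕ) (hn : StrictMono n) (ξ : X)
    (hlim : Filter.Tendsto (fun i : ℕ => T^[n i] x) Filter.atTop (nhds ξ))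
    :
    T ξ = ξ := by
  have hξ : MapClusterPt ξ atTop fun k => T^[k] x := hlim.mapClusterPt.of_comp hn.tendsto_atTop
  exact by_contra fun hne => hper ⟨ξ, stmt8_general hT hξ, hne⟩
end

section
/- There exists a complete metric space (X,d) with countably infinitely many points and a mapping T : X → X such that: (a) T is a mapping contracting perimeters of triangles in the sense of Edelstein; (b) T is not contractive (there exist x ≠ y with d(Tx,Ty) ≥ d(x,y)); and (c) T is not a mapping contracting perimeters of triangles, i.e., for no α ∈ [0,1) does d(Tx,Ty)+d(Ty,Tz)+d(Tx,Tz) ≤ α(d(x,y)+d(y,z)+d(x,z)) hold for all pairwise distinct x,y,z ∈ X. -/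
/-!
Put on the leaves of a star the path metric, `d(i, j) = 1 + w i + w j` for `i ≠ j`. It is uniformly
discrete, hence complete, and the perimeter of a triangle is `3` plus twice the sum of its weights.
Take `w n = 1 / (n + 1)` on `ℕ` and let `T` fix `0` and `1` and shift every `n ≥ 2` to `n + 1`. No
weight increases under `T`, and every triangle has a vertex `n ≥ 2`, whose weight drops, so
perimeters decrease. The pair `0, 1` is not moved at all, and far out both a triangle and its image
have perimeter close to `3`, so no ratio `α < 1` is possible.
-/

open Filter Function
open scoped NNReal Topology

section Perimeters

variable {X : Type*} [Dist X]

/-- Mappings contracting perimeters of triangles in the sense of Edelstein. -/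
def ContractsPerimetersEdelstein (T : X → X) : Prop :=
  ∀ x y z : X, x ≠ y → y ≠ z → x ≠ z →
    dist (T x) (T y) + dist (T y) (T z) + dist (T x) (T z) < dist x y + dist y z + dist z x

/-- Mappings contracting perimeters of triangles, with a uniform ratio `α < 1`. -/
def ContractsPerimeters (T : X → X) : Prop :=
  ∃ α : ℝ, 0 ≤ α ∧ α < 1 ∧ ∀ x y z : X, x ≠ y → y ≠ z → x ≠ z →
    dist (T x) (T y) + dist (T y) (T z) + dist (T x) (T z) ≤
      α * (dist x y + dist y z + dist x z)

end Perimeters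

/-- The leaves of the star whose edge to the leaf `i` has length `1 / 2 + w i`. They carry the path
metric; this is a structure so that the metric does not clash with one on `ι`. -/
@[ext]
structure StarLeaf {ι : Type*} (w : ι → ℝ≥0) where
  index : ι

namespace StarLeaf

variable {ι : Type*} {w : ι → ℝ≥0}

theorem index_injective : Injective (index : StarLeaf w → ι) :=
  fun _ _ => StarLeaf.ext

theorem mk_injective : Injective (mk : ι → StarLeaf w) :=
  fun _ _ => congrArg index

instance [Countable ι] : Countable (StarLeaf w) :=
  index_injective.countable

instance [Infinite ι] : Infinite (StarLeaf w) :=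
  Infinite.of_injective mk mk_injective

open Classical in
noncomputable instance : Dist (StarLeaf w) where
  dist x y := if x = y then 0 else 1 + w x.index + w y.index

theorem dist_of_ne {x y : StarLeaf w} (h : x ≠ y) : dist x y = 1 + w x.index + w y.index :=
  if_neg h

theorem one_le_dist_of_ne {x y : StarLeaf w} (h : x ≠ y) : 1 ≤ dist x y := by
  rw [dist_of_ne h, add_assoc]
  exact le_add_of_nonneg_right (by positivity)

noncomputable instance : MetricSpace (StarLeaf w) where
  dist_self _ := if_pos rfl
  dist_comm x y := by
    rcases eq_or_ne x y with rfl | hxy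
    · rfl
    · rw [dist_of_ne hxy, dist_of_ne hxy.symm, add_right_comm]
  dist_triangle x y z := by
    have dist_self (a : StarLeaf w) : dist a a = 0 := if_pos rfl
    rcases eq_or_ne x y with rfl | hxy
    · rw [dist_self, zero_add]
    rcases eq_or_ne y z with rfl | hyz
    · rw [dist_self, add_zero]
    rcases eq_or_ne x z with rfl | hxz
    · rw [dist_self]
      linarith [one_le_dist_of_ne hxy, one_le_dist_of_ne hyz]
    · rw [dist_of_ne hxy, dist_of_ne hyz, dist_of_ne hxz]
      linarith [(w y.index).coe_nonneg]
  eq_of_dist_eq_zero {x y} h := by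
    by_contra hxy
    linarith [one_le_dist_of_ne hxy]

instance : CompleteSpace (StarLeaf w) :=
  have : DiscreteUniformity (StarLeaf w) :=
    ⟨Metric.uniformSpace_eq_bot.2 ⟨1, one_pos, fun _ _ => one_le_dist_of_ne⟩⟩
  inferInstance

/-- The self-map of the leaves induced by a self-map of the index set. -/
def map (f : ι → ι) (x : StarLeaf w) : StarLeaf w :=
  ⟨f x.index⟩

theorem dist_map_of_ne {f : ι → ι} (hf : Injective f) {x y : StarLeaf w} (h : x ≠ y) :
    dist (map f x) (map f y) = 1 + w (f x.index) + w (f y.index) :=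
  dist_of_ne fun hfxy => h (index_injective (hf (mk_injective hfxy)))

theorem contractsPerimetersEdelstein_map {f : ι → ι} (hf : Injective f)
    (hw : ∀ i j k, i ≠ j → j ≠ k → i ≠ k → w (f i) + w (f j) + w (f k) < w i + w j + w k) :
    ContractsPerimetersEdelstein (map f : StarLeaf w → StarLeaf w) := by
  intro x y z hxy hyz hxz
  have weights_lt : (w (f x.index) + w (f y.index) + w (f z.index) : ℝ) <
      w x.index + w y.index + w z.index := by
    exact_mod_cast hw _ _ _ (index_injective.ne hxy) (index_injective.ne hyz)
      (index_injective.ne hxz)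
  rw [dist_map_of_ne hf hxy, dist_map_of_ne hf hyz, dist_map_of_ne hf hxz,
    dist_of_ne hxy, dist_of_ne hyz, dist_of_ne hxz.symm]
  linarith

theorem tendsto_perimeter {c : ℝ≥0} (hw : Tendsto w cofinite (𝓝 c)) {u : ℕ → ι}
    (hu : Injective u) :
    Tendsto (fun n => dist (mk (w := w) (u n)) (mk (u (n + 1))) +
        dist (mk (w := w) (u (n + 1))) (mk (u (n + 2))) +
        dist (mk (w := w) (u n)) (mk (u (n + 2))))
      atTop (𝓝 (3 + 6 * c)) := by
  have weight_tendsto : Tendsto (fun n => (w (u n) : ℝ)) atTop (𝓝 c) :=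
    NNReal.tendsto_coe.2 (hw.comp (Nat.cofinite_eq_atTop ▸ hu.tendsto_cofinite))
  have dist_eq {m n : ℕ} (h : m ≠ n) :
      dist (mk (w := w) (u m)) (mk (u n)) = 1 + w (u m) + w (u n) :=
    dist_of_ne (mk_injective.ne (hu.ne h))
  have perimeter_eq (n : ℕ) :
      dist (mk (w := w) (u n)) (mk (u (n + 1))) +
          dist (mk (w := w) (u (n + 1))) (mk (u (n + 2))) +
          dist (mk (w := w) (u n)) (mk (u (n + 2))) =
        3 + 2 * (w (u n) + w (u (n + 1)) + w (u (n + 2))) := by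
    rw [dist_eq (by lia), dist_eq (by lia), dist_eq (by lia)]
    ring
  have limit_eq : (3 + 6 * c : ℝ) = 3 + 2 * (c + c + c) := by ring
  simp only [perimeter_eq, limit_eq]
  exact ((((weight_tendsto.add (weight_tendsto.comp (tendsto_add_atTop_nat 1))).add
    (weight_tendsto.comp (tendsto_add_atTop_nat 2))).const_mul 2).const_add 3)

theorem not_contractsPerimeters_map [Infinite ι] {c : ℝ≥0} (hw : Tendsto w cofinite (𝓝 c))
    {f : ι → ι} (hf : Injective f) :
    ¬ ContractsPerimeters (map f : StarLeaf w → StarLeaf w) := by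
  rintro ⟨α, -, hα, hT⟩
  let u := Infinite.natEmbedding ι
  have limit_le : (3 + 6 * c : ℝ) ≤ α * (3 + 6 * c) :=
    le_of_tendsto_of_tendsto' (tendsto_perimeter hw (hf.comp u.injective))
      ((tendsto_perimeter hw u.injective).const_mul α) fun n =>
        hT ⟨u n⟩ ⟨u (n + 1)⟩ ⟨u (n + 2)⟩
          ((mk_injective.comp u.injective).ne (by lia))
          ((mk_injective.comp u.injective).ne (by lia))
          ((mk_injective.comp u.injective).ne (by lia))
  have limit_pos : (0 : ℝ) < 3 + 6 * c := by positivity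
  exact (mul_lt_of_lt_one_left limit_pos hα).not_ge limit_le

end StarLeaf

/-- The weights of the star in the example: strictly decreasing, with limit `0`. -/
noncomputable def harmonicWeight (n : ℕ) : ℝ≥0 :=
  1 / (n + 1)

theorem harmonicWeight_strictAnti : StrictAnti harmonicWeight := fun m n hmn =>
  one_div_lt_one_div_of_lt (by positivity) (by gcongr)

theorem tendsto_harmonicWeight : Tendsto harmonicWeight cofinite (𝓝 0) := by
  rw [Nat.cofinite_eq_atTop]
  exact tendsto_one_div_add_atTop_nhds_zero_nat

/-- The self-map of `ℕ` that fixes `0` and `1` and shifts all other numbers up by one. -/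
def shiftFromTwo (n : ℕ) : ℕ :=
  if n < 2 then n else n + 1

theorem shiftFromTwo_injective : Injective shiftFromTwo := by
  intro m n h
  grind [shiftFromTwo]

theorem le_shiftFromTwo (n : ℕ) : n ≤ shiftFromTwo n := by
  grind [shiftFromTwo]

theorem lt_shiftFromTwo {n : ℕ} (hn : 2 ≤ n) : n < shiftFromTwo n := by
  grind [shiftFromTwo]

theorem harmonicWeight_shiftFromTwo_add_lt {i j k : ℕ} (hij : i ≠ j) (hjk : j ≠ k) (hik : i ≠ k) :
    harmonicWeight (shiftFromTwo i) + harmonicWeight (shiftFromTwo j) +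
        harmonicWeight (shiftFromTwo k) <
      harmonicWeight i + harmonicWeight j + harmonicWeight k := by
  have weight_le (n : ℕ) : harmonicWeight (shiftFromTwo n) ≤ harmonicWeight n :=
    harmonicWeight_strictAnti.antitone (le_shiftFromTwo n)
  have weight_lt {n : ℕ} (hn : 2 ≤ n) : harmonicWeight (shiftFromTwo n) < harmonicWeight n :=
    harmonicWeight_strictAnti (lt_shiftFromTwo hn)
  have two_le : 2 ≤ i ∨ 2 ≤ j ∨ 2 ≤ k := by lia
  rcases two_le with hi | hj | hk
  · exact add_lt_add_of_lt_of_le (add_lt_add_of_lt_of_le (weight_lt hi) (weight_le j)) (weight_le k)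
  · exact add_lt_add_of_lt_of_le (add_lt_add_of_le_of_lt (weight_le i) (weight_lt hj)) (weight_le k)
  · exact add_lt_add_of_le_of_lt (add_le_add (weight_le i) (weight_le j)) (weight_lt hk)

theorem stmt14 :
    ∃ (X : Type) (_ : MetricSpace X), CompleteSpace X ∧ Countable X ∧ Infinite X ∧
      ∃ T : X → X,
        (∀ x y z : X, x ≠ y → y ≠ z → x ≠ z →
          dist (T x) (T y) + dist (T y) (T z) + dist (T x) (T z) <
            dist x y + dist y z + dist z x) ∧
        (∃ x y : X, x ≠ y ∧ dist x y ≤ dist (T x) (T y)) ∧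
        ¬ ∃ α : ℝ, 0 ≤ α ∧ α < 1 ∧
          ∀ x y z : X, x ≠ y → y ≠ z → x ≠ z →
            dist (T x) (T y) + dist (T y) (T z) + dist (T x) (T z) ≤
              α * (dist x y + dist y z + dist x z) := by
  refine ⟨StarLeaf harmonicWeight, inferInstance, inferInstance, inferInstance, inferInstance,
    StarLeaf.map shiftFromTwo, ?edelstein, ?not_contractive, ?no_uniform_ratio⟩
  case edelstein =>
    exact StarLeaf.contractsPerimetersEdelstein_map shiftFromTwo_injective
      fun _ _ _ => harmonicWeight_shiftFromTwo_add_lt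
  case not_contractive =>
    exact ⟨⟨0⟩, ⟨1⟩, StarLeaf.mk_injective.ne zero_ne_one, le_rfl⟩
  case no_uniform_ratio =>
    exact StarLeaf.not_contractsPerimeters_map tendsto_harmonicWeight shiftFromTwo_injective
end
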